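/- If D ⊆ ℝℙⁿ is an open properly convex set, then its elliptic tube D^e ⊆ ℂℙⁿ is ℂ-convex. -/

import Mathlib

open scoped ComplexConjugate

noncomputable section

abbrev RV (n : ℕ) : Type := Fin (n + 1) → ℝ
abbrev CV (n : ℕ) : Type := Fin (n + 1) → ℂ
abbrev RP (n : ℕ) : Type := Projectivization ℝ (RV n)
abbrev CP (n : ℕ) : Type := Projectivization ℂ (CV n)

/-- The quotient topology on a projectivization. -/
instance projTopology {K V : Type*} [DivisionRing K] [AddCommGroup V] [Module K V]
    [TopologicalSpace V] : TopologicalSpace (Projectivization K V) :=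
  inferInstanceAs (TopologicalSpace (Quotient (projectivizationSetoid K V)))

/-- Complexification of a real vector. -/
def cplx {n : ℕ} (v : RV n) : CV n := fun i => (v i : ℂ)

/-- The closed (possibly degenerate) projective segment spanned by two lifts. -/
def realSeg {n : ℕ} (v₀ v₁ : RV n) : Set (RP n) :=
  {x | ∃ c₀ c₁ : ℝ, 0 ≤ c₀ * c₁ ∧ ∃ h : c₀ • v₀ + c₁ • v₁ ≠ 0,
    x = Projectivization.mk ℝ (c₀ • v₀ + c₁ • v₁) h}

/-- The elliptic tube over the closed segment determined by the lifts `v₀ v₁`. -/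
def segTube {n : ℕ} (v₀ v₁ : RV n) : Set (CP n) :=
  {z | ∃ c₀ c₁ : ℂ, 0 ≤ (c₀ * conj c₁).re ∧ ∃ h : c₀ • cplx v₀ + c₁ • cplx v₁ ≠ 0,
    z = Projectivization.mk ℂ (c₀ • cplx v₀ + c₁ • cplx v₁) h}

/-- The elliptic tube over a subset `D` of real projective space: the union of the tubes
over all closed segments contained in `D`. -/
def eTube {n : ℕ} (D : Set (RP n)) : Set (CP n) :=
  ⋃ (v₀ : RV n) (v₁ : RV n) (_ : v₀ ≠ 0) (_ : v₁ ≠ 0) (_ : realSeg v₀ v₁ ⊆ D),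
    segTube v₀ v₁

/-- Real projective lines. -/
def isLineR {n : ℕ} (L : Set (RP n)) : Prop :=
  ∃ W : Submodule ℝ (RV n), Module.finrank ℝ W = 2 ∧ L = {x | x.rep ∈ W}

/-- Convexity in real projective space: the set contains no projective line and its
intersection with every projective line is connected. -/
def convexR {n : ℕ} (D : Set (RP n)) : Prop :=
  (∀ L, isLineR L → ¬ L ⊆ D) ∧ ∀ L, isLineR L → IsPreconnected (D ∩ L)

/-- Projective hyperplanes in real projective space. -/
def isHypR {n : ℕ} (H : Set (RP n)) : Prop :=
  ∃ ξ : Module.Dual ℝ (RV n), ξ ≠ 0 ∧ H = {x | ξ x.rep = 0}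

/-- Proper convexity: convex, not contained in a projective hyperplane, and containing
no affine line (projective line with one point removed). -/
def properlyConvexR {n : ℕ} (D : Set (RP n)) : Prop :=
  convexR D ∧ (∀ H, isHypR H → ¬ D ⊆ H) ∧
    ∀ L, isLineR L → ∀ p ∈ L, ¬ (L \ {p}) ⊆ D

/-- Complex projective lines in `ℂℙⁿ`. -/
def isLineC {n : ℕ} (L : Set (CP n)) : Prop :=
  ∃ W : Submodule ℂ (CV n), Module.finrank ℂ W = 2 ∧ L = {z | z.rep ∈ W}

/-- ℂ-convexity: the set contains no complex projective line, and its intersection with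
every complex projective line is connected and simply connected. -/
def cConvex {n : ℕ} (E : Set (CP n)) : Prop :=
  (∀ L, isLineC L → ¬ L ⊆ E) ∧
    ∀ L, isLineC L → IsPreconnected (E ∩ L) ∧
      ((E ∩ L).Nonempty → SimplyConnectedSpace ↥(E ∩ L))

/-- The canonical projection onto a projectivization is an open quotient map. -/
theorem Projectivization.isOpenQuotientMap_mk' {K V : Type*} [DivisionRing K] [AddCommGroup V]
    [Module K V] [TopologicalSpace V] [ContinuousConstSMul K V] :
    IsOpenQuotientMap (Projectivization.mk' K : {v : V // v ≠ 0} → Projectivization K V) := by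
  have hq : Topology.IsQuotientMap (Projectivization.mk' K : {v : V // v ≠ 0} → Projectivization K V) :=
    isQuotientMap_quot_mk
  refine ⟨hq.surjective, hq.continuous, fun U hU => ?_⟩
  rw [← hq.isOpen_preimage]
  have h : Projectivization.mk' K ⁻¹' (Projectivization.mk' K '' U) =
      ⋃ a : Kˣ, {v : {v : V // v ≠ 0} | (⟨a • v.1, (smul_ne_zero_iff_ne a).2 v.2⟩ :
        {v : V // v ≠ 0}) ∈ U} := by
    ext v
    simp only [Set.mem_preimage, Set.mem_image, Set.mem_iUnion, Set.mem_ofPred_eq]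
    constructor
    · rintro ⟨u, hu, huv⟩
      obtain ⟨a, ha⟩ := (Projectivization.mk_eq_mk_iff K u.1 v.1 u.2 v.2).1 huv
      exact ⟨a, by convert hu⟩
    · rintro ⟨a, ha⟩
      exact ⟨_, ha, (Projectivization.mk_eq_mk_iff K _ _ _ v.2).2 ⟨a, rfl⟩⟩
  rw [h]
  refine isOpen_iUnion fun a => hU.preimage ?_
  exact Continuous.subtype_mk (continuous_subtype_val.const_smul (a : K)) _

/-- The nonzero vectors representing a point of `D`. -/
def liftR {n : ℕ} (D : Set (RP n)) : Set (RV n) :=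
  {v | ∃ h : v ≠ 0, Projectivization.mk ℝ v h ∈ D}

theorem smul_mem_liftR {n : ℕ} {D : Set (RP n)} {v : RV n} (hv : v ∈ liftR D) {c : ℝ}
    (hc : c ≠ 0) : c • v ∈ liftR D := by
  obtain ⟨h, hD⟩ := hv
  refine ⟨smul_ne_zero hc h, ?_⟩
  rwa [(Projectivization.mk_eq_mk_iff' ℝ (c • v) v _ h).2 ⟨c, rfl⟩]

theorem rep_mem_liftR {n : ℕ} {D : Set (RP n)} {x : RP n} : x.rep ∈ liftR D ↔ x ∈ D :=
  ⟨fun ⟨_, h⟩ => by rwa [Projectivization.mk_rep] at h,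
    fun h => ⟨x.rep_nonzero, by rwa [Projectivization.mk_rep]⟩⟩

theorem isOpen_liftR {n : ℕ} {D : Set (RP n)} (hD : IsOpen D) : IsOpen (liftR D) := by
  have h : liftR D =
      Subtype.val '' ((Projectivization.mk' ℝ : {v : RV n // v ≠ 0} → RP n) ⁻¹' D) := by
    ext v
    simp [liftR, Projectivization.mk'_eq_mk]
  rw [h]
  exact isOpen_ne.isOpenMap_subtype_val _
    (hD.preimage Projectivization.isOpenQuotientMap_mk'.continuous)

/-- Every nontrivial nonnegative combination of `v` and `w` represents a point of `D`. -/
def posJoined {n : ℕ} (D : Set (RP n)) (v w : RV n) : Prop :=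
  ∀ a b : ℝ, 0 ≤ a → 0 ≤ b → 0 < a + b → a • v + b • w ∈ liftR D

namespace posJoined

variable {n : ℕ} {D : Set (RP n)} {u v w : RV n}

theorem symm (h : posJoined D v w) : posJoined D w v := fun a b ha hb hab => by
  rw [add_comm]
  exact h b a hb ha (by linarith)

theorem right_mem (h : posJoined D v w) : w ∈ liftR D := by
  simpa using h 0 1 le_rfl zero_le_one (by norm_num)

theorem left_mem (h : posJoined D v w) : v ∈ liftR D := h.symm.right_mem

theorem of_smul (hv : v ∈ liftR D) {s : ℝ} (hs : 0 < s) : posJoined D v (s • v) :=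
  fun a b ha hb hab => by
    rw [smul_smul, ← add_smul]
    refine smul_mem_liftR hv (ne_of_gt ?_)
    rcases ha.lt_or_eq with h | h
    · positivity
    · have : 0 < b := by linarith
      positivity

theorem comb (h : posJoined D v w) {a b : ℝ} (ha : 0 ≤ a) (hb : 0 ≤ b) (hab : 0 < a + b) :
    posJoined D v (a • v + b • w) := fun x y hx hy hxy => by
  have : x • v + y • (a • v + b • w) = (x + y * a) • v + (y * b) • w := by module
  rw [this]
  refine h _ _ (by positivity) (by positivity) ?_
  rcases hx.lt_or_eq with h | h
  · nlinarith [mul_nonneg hy hab.le]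
  · have : 0 < y := by linarith
    nlinarith [mul_pos this hab]

theorem isOpen_setOf (hD : IsOpen D) (v : RV n) : IsOpen {w | posJoined D v w} := by
  have h : {w | posJoined D v w} =
      {w | ∀ t ∈ Set.Icc (0 : ℝ) 1, (1 - t) • v + t • w ∈ liftR D} := by
    ext w
    refine ⟨fun h t ht => h _ _ (by linarith [ht.2]) ht.1 (by linarith), fun h a b ha hb hab => ?_⟩
    have := smul_mem_liftR (h (b / (a + b)) ⟨by positivity, by
      rw [div_le_one hab]; linarith⟩) hab.ne'
    convert this using 1
    rw [smul_add, smul_smul, smul_smul]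
    congr 2 <;> field_simp
    ring
  rw [h, isOpen_iff_mem_nhds]
  intro w hw
  refine isCompact_Icc.eventually_forall_of_forall_eventually
    (P := fun w (t : ℝ) => (1 - t) • v + t • w ∈ liftR D) fun t ht => ?_
  have hc : Continuous fun z : RV n × ℝ => (1 - z.2) • v + z.2 • z.1 := by fun_prop
  exact hc.continuousAt.eventually ((isOpen_liftR hD).mem_nhds (hw t ht))

end posJoined

theorem exists_smul_of_not_linearIndependent {V : Type*} [AddCommGroup V] [Module ℝ V] {v w : V}
    (hv : v ≠ 0) (h : ¬ LinearIndependent ℝ ![v, w]) : ∃ s : ℝ, s • v = w := by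
  rw [LinearIndependent.pair_iff' hv] at h
  simpa using h

/-- The real projective line through two independent vectors. -/
theorem isLineR_span_pair {n : ℕ} {v w : RV n} (h : LinearIndependent ℝ ![v, w]) :
    isLineR {x : RP n | x.rep ∈ Submodule.span ℝ {v, w}} := by
  refine ⟨_, ?_, rfl⟩
  rw [← Matrix.range_cons_cons_empty v w ![], finrank_span_eq_card h, Fintype.card_fin]

theorem posJoined.not_neg {n : ℕ} {D : Set (RP n)} (hD : convexR D) {v w : RV n}
    (h : posJoined D v w) : ¬ posJoined D v (-w) := by
  intro h'
  by_cases hli : LinearIndependent ℝ ![v, w]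
  · refine hD.1 _ (isLineR_span_pair hli) fun x hx => ?_
    rw [← rep_mem_liftR]
    obtain ⟨a, b, hab⟩ := Submodule.mem_span_pair.1 hx
    have h0 := x.rep_nonzero
    rw [← hab] at h0 ⊢
    have hne : a ≠ 0 ∨ b ≠ 0 := by
      by_contra! hc
      simp [hc.1, hc.2] at h0
    have hneg : ∀ y : RV n, -y ∈ liftR D → y ∈ liftR D := fun y hy => by
      simpa using smul_mem_liftR hy (c := -1) (by norm_num)
    rcases le_total 0 a with ha | ha <;> rcases le_total 0 b with hb | hb
    · exact h a b ha hb (by rcases hne with h | h <;> positivity)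
    · have := h' a (-b) ha (by linarith) (by
        rcases hne with h | h
        · have := lt_of_le_of_ne ha h.symm; linarith
        · have := lt_of_le_of_ne hb h; linarith)
      simpa using this
    · apply hneg
      have := h' (-a) b (by linarith) hb (by
        rcases hne with h | h
        · have := lt_of_le_of_ne ha h; linarith
        · have := lt_of_le_of_ne hb h.symm; linarith)
      convert this using 1
      module
    · apply hneg
      have := h (-a) (-b) (by linarith) (by linarith) (by
        rcases hne with h | h
        · have := lt_of_le_of_ne ha h; linarith
        · have := lt_of_le_of_ne hb h; linarith)
      convert this using 1
      module
  · obtain ⟨s, rfl⟩ := exists_smul_of_not_linearIndependent h.left_mem.1 hli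
    rcases le_total 0 s with hs | hs
    · exact (h' s 1 hs zero_le_one (by linarith)).1 (by module)
    · exact (h (-s) 1 (by linarith) zero_le_one (by linarith)).1 (by module)

theorem LinearIndependent.exists_dual_pair {V : Type*} [AddCommGroup V] [Module ℝ V] {v w : V}
    (h : LinearIndependent ℝ ![v, w]) (a b : ℝ) : ∃ f : V →ₗ[ℝ] ℝ, f v = a ∧ f w = b := by
  obtain ⟨f, hf⟩ := ((Module.Basis.span h).constr ℝ ![a, b]).exists_extend
  have key : ∀ i, f (![v, w] i) = ![a, b] i := fun i => by
    rw [← (Module.Basis.span h).constr_basis ℝ ![a, b] i, ← hf, LinearMap.comp_apply,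
      Module.Basis.span_apply]
    rfl
  exact ⟨f, key 0, key 1⟩

theorem isOpen_setOf_rep_prod_pos {n : ℕ} (f g : RV n →ₗ[ℝ] ℝ) :
    IsOpen {x : RP n | 0 < f x.rep * g x.rep} := by
  rw [← Projectivization.isOpenQuotientMap_mk'.isQuotientMap.isOpen_preimage]
  have h : (Projectivization.mk' ℝ : {v : RV n // v ≠ 0} → RP n) ⁻¹'
      {x : RP n | 0 < f x.rep * g x.rep} = {v | 0 < f v.1 * g v.1} := by
    ext v
    obtain ⟨a, ha⟩ := Projectivization.exists_smul_eq_mk_rep ℝ v.1 v.2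
    simp only [Set.mem_preimage, Set.mem_ofPred_eq, Projectivization.mk'_eq_mk, ← ha,
      Units.smul_def, map_smul, smul_eq_mul]
    rw [show (a : ℝ) * f v.1 * (a * g v.1) = (a : ℝ) ^ 2 * (f v.1 * g v.1) by ring]
    exact mul_pos_iff_of_pos_left (by have := a.ne_zero; positivity)
  rw [h]
  have hf := f.continuous_of_finiteDimensional
  have hg := g.continuous_of_finiteDimensional
  exact isOpen_lt continuous_const (by fun_prop)

/-- Two representatives of points of a convex set are joined, up to changing a sign. -/
theorem posJoined_or_neg {n : ℕ} {D : Set (RP n)} (hD : convexR D) {v w : RV n}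
    (hv : v ∈ liftR D) (hw : w ∈ liftR D) : posJoined D v w ∨ posJoined D v (-w) := by
  by_cases hli : LinearIndependent ℝ ![v, w]
  · by_contra! hcon
    obtain ⟨h₁, h₂⟩ := hcon
    simp only [posJoined, not_forall] at h₁ h₂
    obtain ⟨a, b, ha, hb, hab, hp⟩ := h₁
    obtain ⟨c, d, hc, hd, hcd, hq⟩ := h₂
    have hw' : -w ∈ liftR D := by simpa using smul_mem_liftR hw (c := -1) (by norm_num)
    have pos : ∀ {w' : RV n} {a b : ℝ}, w' ∈ liftR D → 0 ≤ a → 0 ≤ b → 0 < a + b →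
        a • v + b • w' ∉ liftR D → 0 < a ∧ 0 < b := by
      intro w' a b hw' ha hb hab hp
      refine ⟨lt_of_le_of_ne ha ?_, lt_of_le_of_ne hb ?_⟩ <;> rintro rfl <;> apply hp
      · simpa using smul_mem_liftR hw' (c := b) (by linarith)
      · simpa using smul_mem_liftR hv (c := a) (by linarith)
    obtain ⟨ha, hb⟩ := pos hw ha hb hab hp
    obtain ⟨hc, hd⟩ := pos hw' hc hd hcd hq
    obtain ⟨f, hfv, hfw⟩ := hli.exists_dual_pair b (-a)
    obtain ⟨g, hgv, hgw⟩ := hli.exists_dual_pair d c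
    have key := hD.2 _ (isLineR_span_pair hli) _ _ (isOpen_setOf_rep_prod_pos f g)
      (isOpen_setOf_rep_prod_pos (-f) g) ?_ ?_ ?_
    · obtain ⟨x, -, hx₁, hx₂⟩ := key
      simp only [Set.mem_ofPred_eq, LinearMap.neg_apply] at hx₁ hx₂
      linarith
    · rintro x ⟨hxD, hxL⟩
      rw [← rep_mem_liftR] at hxD
      obtain ⟨s, t, hst⟩ := Submodule.mem_span_pair.1 hxL
      have h0 := x.rep_nonzero
      simp only [Set.mem_union, Set.mem_ofPred_eq, LinearMap.neg_apply]
      rw [← hst] at h0 hxD ⊢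
      simp only [map_add, map_smul, smul_eq_mul, hfv, hfw, hgv, hgw]
      have hne : (s * b + t * -a) * (s * d + t * c) ≠ 0 := by
        intro hz
        rcases mul_eq_zero.1 hz with hz | hz
        · have ht : t = s * b / a := by field_simp; linarith
          have hs : s ≠ 0 := by rintro rfl; simp [ht] at h0
          apply hp
          convert smul_mem_liftR hxD (c := a / s) (by positivity) using 1
          rw [ht, smul_add, smul_smul, smul_smul]
          congr 2 <;> field_simp
        · have ht : t = -(s * d / c) := by field_simp; linarith
          have hs : s ≠ 0 := by rintro rfl; simp [ht] at h0
          apply hq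
          convert smul_mem_liftR hxD (c := c / s) (by positivity) using 1
          rw [ht, smul_add, smul_smul, smul_smul, smul_neg, ← neg_smul]
          congr 2 <;> field_simp
      rcases hne.lt_or_gt with h | h
      · right; linarith
      · left; exact h
    · obtain ⟨hv0, hvD⟩ := hv
      obtain ⟨r, hr⟩ := Projectivization.exists_smul_eq_mk_rep ℝ v hv0
      refine ⟨_, ⟨hvD, ?_⟩, ?_⟩
      · rw [Set.mem_ofPred_eq, ← hr]
        exact Submodule.smul_mem _ _ (Submodule.subset_span (by simp))
      · rw [Set.mem_ofPred_eq, ← hr]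
        simp only [Units.smul_def, map_smul, smul_eq_mul, hfv, hgv]
        have := r.ne_zero
        have : 0 < (r : ℝ) ^ 2 * (b * d) := by positivity
        linarith
    · obtain ⟨hw0, hwD⟩ := hw
      obtain ⟨r, hr⟩ := Projectivization.exists_smul_eq_mk_rep ℝ w hw0
      refine ⟨_, ⟨hwD, ?_⟩, ?_⟩
      · rw [Set.mem_ofPred_eq, ← hr]
        exact Submodule.smul_mem _ _ (Submodule.subset_span (by simp))
      · rw [Set.mem_ofPred_eq, ← hr]
        simp only [Units.smul_def, map_smul, smul_eq_mul, hfw, hgw, LinearMap.neg_apply]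
        have := r.ne_zero
        have : 0 < (r : ℝ) ^ 2 * (a * c) := by positivity
        linarith
  · obtain ⟨s, rfl⟩ := exists_smul_of_not_linearIndependent hv.1 hli
    have hs : s ≠ 0 := by rintro rfl; exact hw.1 (zero_smul _ _)
    rcases hs.lt_or_gt with hs | hs
    · right
      rw [← neg_smul]
      exact .of_smul hv (by linarith)
    · exact Or.inl (.of_smul hv hs)

theorem posJoined.trans {n : ℕ} {D : Set (RP n)} (hDo : IsOpen D) (hD : convexR D)
    {u v w : RV n} (huv : posJoined D u v) (hvw : posJoined D v w) : posJoined D u w := by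
  by_contra huw
  let γ : ℝ → RV n := fun t => (1 - t) • v + t • w
  have hγ : Continuous γ := by fun_prop
  have hmem : ∀ t ∈ Set.Icc (0 : ℝ) 1, γ t ∈ liftR D := fun t ht =>
    hvw _ _ (by linarith [ht.2]) ht.1 (by linarith)
  have h0 : γ 0 = v := by simp [γ]
  have h1 : γ 1 = w := by simp [γ]
  obtain ⟨t, -, ht₁, ht₂⟩ := (isPreconnected_Icc : IsPreconnected (Set.Icc (0 : ℝ) 1))
    {t | posJoined D u (γ t)} {t | posJoined D u (-γ t)}
    ((posJoined.isOpen_setOf hDo u).preimage hγ) ((posJoined.isOpen_setOf hDo u).preimage hγ.neg)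
    (fun t ht => posJoined_or_neg hD huv.left_mem (hmem t ht))
    ⟨0, by simp, by simpa [h0] using huv⟩
    ⟨1, by simp, by
      have := posJoined_or_neg hD huv.left_mem hvw.right_mem
      simpa [h1] using this.resolve_left huw⟩
  exact ht₁.not_neg hD ht₂

/-- A nonempty open convex subset of real projective space is the projectivization of an open
convex cone. -/
theorem exists_cone_of_open_convexR {n : ℕ} {D : Set (RP n)} (hDo : IsOpen D) (hD : convexR D)
    (hne : D.Nonempty) : ∃ C : Set (RV n), IsOpen C ∧
      (∀ u ∈ C, ∀ v ∈ C, ∀ a b : ℝ, 0 ≤ a → 0 ≤ b → 0 < a + b → a • u + b • v ∈ C) ∧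
      (∀ u ∈ C, ∀ v, posJoined D u v → v ∈ C) ∧
      (∀ v, v ∈ liftR D ↔ v ∈ C ∨ -v ∈ C) := by
  obtain ⟨x, hx⟩ := hne
  have hx' := rep_mem_liftR.2 hx
  refine ⟨{w | posJoined D x.rep w}, posJoined.isOpen_setOf hDo _, ?_, ?_, ?_⟩
  · intro u hu v hv a b ha hb hab
    exact hu.trans hDo hD (((posJoined.symm hu).trans hDo hD hv).comb ha hb hab)
  · intro u hu v huv
    exact hu.trans hDo hD huv
  · intro v
    refine ⟨fun hv => posJoined_or_neg hD hx' hv, ?_⟩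
    rintro (h | h)
    · exact h.right_mem
    · simpa using smul_mem_liftR h.right_mem (c := -1) (by norm_num)

/-- The vectors whose real and imaginary parts both lie in `C`. -/
def quadrantTube {n : ℕ} (C : Set (RV n)) : Set (CV n) :=
  {w | (fun i => (w i).re) ∈ C ∧ (fun i => (w i).im) ∈ C}

/-- Two complex numbers at an angle of at most `π / 2`, not both zero, can be rotated into the
closed first quadrant with their sum in the open quadrant. -/
theorem exists_mul_mem_quadrant {c₀ c₁ : ℂ} (h : 0 ≤ (c₀ * conj c₁).re) (hne : c₀ ≠ 0 ∨ c₁ ≠ 0) :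
    ∃ l : ℂ, (0 ≤ (l * c₀).re ∧ 0 ≤ (l * c₁).re ∧ 0 < (l * c₀).re + (l * c₁).re) ∧
      (0 ≤ (l * c₀).im ∧ 0 ≤ (l * c₁).im ∧ 0 < (l * c₀).im + (l * c₁).im) := by
  have sq_pos : ∀ c : ℂ, c ≠ 0 → 0 < c.re * c.re + c.im * c.im := fun c hc => by
    simpa [Complex.normSq_apply] using Complex.normSq_pos.2 hc
  by_cases h0 : c₀ = 0
  · subst h0
    have := sq_pos c₁ (by simpa using hne)
    refine ⟨(1 + Complex.I) * conj c₁, ?_⟩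
    simp
    constructor <;> constructor <;> nlinarith
  · have hr := sq_pos c₀ h0
    simp at h
    rcases lt_trichotomy (c₀.re * c₁.im - c₀.im * c₁.re) 0 with hb | hb | hb
    · refine ⟨Complex.I * conj c₀, ?_⟩
      simp
      refine ⟨⟨?_, ?_, ?_⟩, ?_, ?_, ?_⟩ <;> nlinarith
    · refine ⟨(1 + Complex.I) * conj c₀, ?_⟩
      simp
      refine ⟨⟨?_, ?_, ?_⟩, ?_, ?_, ?_⟩ <;> nlinarith
    · refine ⟨conj c₀, ?_⟩
      simp
      refine ⟨⟨?_, ?_, ?_⟩, ?_, ?_, ?_⟩ <;> nlinarith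

theorem exists_smul_comb_mem_quadrantTube {n : ℕ} {C : Set (RV n)}
    (hC : ∀ u ∈ C, ∀ v ∈ C, ∀ a b : ℝ, 0 ≤ a → 0 ≤ b → 0 < a + b → a • u + b • v ∈ C)
    {v₀ v₁ : RV n} (hv₀ : v₀ ∈ C) (hv₁ : v₁ ∈ C) {c₀ c₁ : ℂ} (h : 0 ≤ (c₀ * conj c₁).re)
    (hne : c₀ ≠ 0 ∨ c₁ ≠ 0) :
    ∃ l : ℂ, l • (c₀ • cplx v₀ + c₁ • cplx v₁) ∈ quadrantTube C := by
  obtain ⟨l, ⟨h₁, h₂, h₃⟩, h₄, h₅, h₆⟩ := exists_mul_mem_quadrant h hne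
  refine ⟨l, ?_, ?_⟩
  · convert hC v₀ hv₀ v₁ hv₁ _ _ h₁ h₂ h₃ using 1
    ext i
    simp [cplx]
    ring
  · convert hC v₀ hv₀ v₁ hv₁ _ _ h₄ h₅ h₆ using 1
    ext i
    simp [cplx]
    ring

theorem exists_smul_rep_mk_mem_iff {n : ℕ} (K : Set (CV n)) {v : CV n} (hv : v ≠ 0) :
    (∃ l : ℂ, l • (Projectivization.mk ℂ v hv).rep ∈ K) ↔ ∃ l : ℂ, l • v ∈ K := by
  obtain ⟨a, ha⟩ := Projectivization.exists_smul_eq_mk_rep ℂ v hv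
  rw [← ha]
  constructor
  · rintro ⟨l, hl⟩
    exact ⟨l * a, by simpa [Units.smul_def, smul_smul] using hl⟩
  · rintro ⟨l, hl⟩
    exact ⟨l * (a : ℂ)⁻¹, by simpa [Units.smul_def, smul_smul] using hl⟩

/-- The elliptic tube over the projectivization of a convex cone `C` is the projectivization
of `C + i C`. -/
theorem eTube_eq {n : ℕ} {D : Set (RP n)} {C : Set (RV n)}
    (hC : ∀ u ∈ C, ∀ v ∈ C, ∀ a b : ℝ, 0 ≤ a → 0 ≤ b → 0 < a + b → a • u + b • v ∈ C)
    (hCj : ∀ u ∈ C, ∀ v, posJoined D u v → v ∈ C)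
    (hCD : ∀ v, v ∈ liftR D ↔ v ∈ C ∨ -v ∈ C) :
    eTube D = {z | ∃ l : ℂ, l • z.rep ∈ quadrantTube C} := by
  have diag : ∀ v ∈ C, (1 + Complex.I) • cplx v ∈ quadrantTube C := fun v hv => by
    constructor <;> simpa [cplx] using hv
  have cplx_neg : ∀ v : RV n, cplx (-v) = -cplx v := fun v => by ext i; simp [cplx]
  ext z
  simp only [eTube, Set.mem_iUnion, exists_prop, Set.mem_ofPred_eq]
  constructor
  · rintro ⟨v₀, v₁, h₀, h₁, hseg, c₀, c₁, hc, hne, rfl⟩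
    rw [exists_smul_rep_mk_mem_iff]
    have hv₀ : v₀ ∈ liftR D := ⟨h₀, hseg ⟨1, 0, by simp, by simpa using h₀, by simp⟩⟩
    by_cases hj : posJoined D v₀ v₁
    · have hc' : c₀ ≠ 0 ∨ c₁ ≠ 0 := by
        by_contra! hcon
        simp [hcon.1, hcon.2] at hne
      rcases (hCD v₀).1 hv₀ with hv | hv
      · exact exists_smul_comb_mem_quadrantTube hC hv (hCj _ hv _ hj) hc hc'
      · have hj' : posJoined D (-v₀) (-v₁) := fun a b ha hb hab => by
          convert smul_mem_liftR (hj a b ha hb hab) (c := -1) (by norm_num) using 1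
          module
        obtain ⟨l, hl⟩ := exists_smul_comb_mem_quadrantTube hC hv (hCj _ hv _ hj') hc hc'
        refine ⟨-l, ?_⟩
        convert hl using 1
        rw [cplx_neg, cplx_neg]
        module
    · simp only [posJoined, not_forall] at hj
      obtain ⟨a, b, ha, hb, hab, hn⟩ := hj
      have hz : a • v₀ + b • v₁ = 0 := by
        by_contra hz
        exact hn ⟨hz, hseg ⟨a, b, mul_nonneg ha hb, hz, rfl⟩⟩
      have hb0 : b ≠ 0 := by
        rintro rfl
        rw [zero_smul, add_zero, smul_eq_zero] at hz
        exact hz.elim (by intro h; linarith) h₀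
      have hv : v₁ = (-(a / b)) • v₀ := by
        have : b • v₁ = -(a • v₀) := by rw [eq_neg_iff_add_eq_zero, add_comm, hz]
        rw [← inv_smul_smul₀ hb0 v₁, this, smul_neg, smul_smul, neg_smul]
        congr 2
        field_simp
      have hcomb : c₀ • cplx v₀ + c₁ • cplx v₁ = (c₀ - c₁ * (a / b : ℝ)) • cplx v₀ := by
        ext i
        simp [hv, cplx]
        ring
      rw [hcomb] at hne ⊢
      have he := left_ne_zero_of_smul hne
      set e := c₀ - c₁ * (a / b : ℝ)
      rcases (hCD v₀).1 hv₀ with hv | hv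
      · refine ⟨(1 + Complex.I) * e⁻¹, ?_⟩
        rw [smul_smul, mul_assoc, inv_mul_cancel₀ he, mul_one]
        exact diag _ hv
      · refine ⟨-(1 + Complex.I) * e⁻¹, ?_⟩
        rw [smul_smul, mul_assoc, inv_mul_cancel₀ he, mul_one, neg_smul, ← smul_neg, ← cplx_neg]
        exact diag _ hv
  · rintro ⟨l, hu, hv⟩
    set u : RV n := fun i => ((l • z.rep) i).re
    set v : RV n := fun i => ((l • z.rep) i).im
    have hlift : ∀ x ∈ C, x ∈ liftR D := fun x hx => (hCD x).2 (Or.inl hx)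
    have huv : (1 : ℂ) • cplx u + Complex.I • cplx v = l • z.rep := by
      ext i
      simp [u, v, cplx, Complex.ext_iff]
    refine ⟨u, v, (hlift u hu).1, (hlift v hv).1, ?_, 1, Complex.I, by simp, ?_, ?_⟩
    · rintro x ⟨a, b, hab, hne, rfl⟩
      suffices h : a • u + b • v ∈ liftR D from h.2
      have hab' : a ≠ 0 ∨ b ≠ 0 := by
        by_contra! hcon
        simp [hcon.1, hcon.2] at hne
      rw [hCD]
      rcases mul_nonneg_iff.1 hab with ⟨ha, hb⟩ | ⟨ha, hb⟩
      · exact Or.inl (hC u hu v hv a b ha hb (by rcases hab' with h | h <;> positivity))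
      · right
        convert hC u hu v hv (-a) (-b) (by linarith) (by linarith) (by
          rcases hab' with h | h
          · have := lt_of_le_of_ne ha h; linarith
          · have := lt_of_le_of_ne hb h; linarith) using 1
        module
    · rw [huv]
      intro h0
      have : u = 0 := by
        ext i
        exact congrArg Complex.re (congrFun h0 i)
      exact (hlift u hu).1 this
    · exact z.mk_rep.symm.trans
        ((Projectivization.mk_eq_mk_iff' ℂ _ _ _ z.rep_nonzero).2 ⟨l, huv.symm⟩).symm

theorem rep_mk_mem_iff {n : ℕ} (W : Submodule ℂ (CV n)) {v : CV n} (hv : v ≠ 0) :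
    (Projectivization.mk ℂ v hv).rep ∈ W ↔ v ∈ W := by
  obtain ⟨a, ha⟩ := Projectivization.exists_smul_eq_mk_rep ℂ v hv
  rw [← ha, Units.smul_def, W.smul_mem_iff a.ne_zero]

/-- The affine normalization of a point with respect to a linear form is continuous off the
hyperplane defined by that form. -/
theorem continuousAt_inv_smul_rep {n : ℕ} (f : CV n →L[ℂ] ℂ) {z : CP n} (hz : f z.rep ≠ 0) :
    ContinuousAt (fun x : CP n => (f x.rep)⁻¹ • x.rep) z := by
  have hq := Projectivization.isOpenQuotientMap_mk' (K := ℂ) (V := CV n)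
  have hz' : Projectivization.mk' ℂ ⟨z.rep, z.rep_nonzero⟩ = z := z.mk_rep
  rw [← hz', ← hq.continuousAt_comp_iff]
  have heq : (fun x : CP n => (f x.rep)⁻¹ • x.rep) ∘ Projectivization.mk' ℂ =
      fun v : {v : CV n // v ≠ 0} => (f v.1)⁻¹ • v.1 := by
    ext1 v
    obtain ⟨a, ha⟩ := Projectivization.exists_smul_eq_mk_rep ℂ v.1 v.2
    simp only [Function.comp_apply, Projectivization.mk'_eq_mk, ← ha, Units.smul_def, map_smul,
      smul_eq_mul, mul_inv, smul_smul]
    congr 1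
    field_simp [a.ne_zero]
  rw [heq]
  have hfc : Continuous fun v : {v : CV n // v ≠ 0} => f v.1 := by fun_prop
  exact (hfc.continuousAt.inv₀ hz).smul continuous_subtype_val.continuousAt

/-- The projectivization of an open convex set of vectors not containing the origin is
`ℂ`-convex. -/
theorem cConvex_of_convex {n : ℕ} {K : Set (CV n)} (hKo : IsOpen K) (hK : Convex ℝ K)
    (h0 : (0 : CV n) ∉ K) : cConvex {z : CP n | ∃ l : ℂ, l • z.rep ∈ K} := by
  obtain ⟨f, hf⟩ := RCLike.geometric_hahn_banach_point_open (𝕜 := ℂ) hK hKo h0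
  have hfK : ∀ w ∈ K, f w ≠ 0 := fun w hw h => by simpa [h] using hf w hw
  refine ⟨?_, ?_⟩
  · rintro L ⟨W, hW, rfl⟩ hL
    have hker : LinearMap.ker (f.toLinearMap.domRestrict W) ≠ ⊥ := by
      refine LinearMap.ker_ne_bot_of_finrank_lt ?_
      simp [hW]
    obtain ⟨w, hw, hw0⟩ := Submodule.exists_mem_ne_zero_of_ne_bot hker
    have hw0' : (w : CV n) ≠ 0 := by simpa using hw0
    have hmem := hL ((rep_mk_mem_iff W hw0').2 w.2)
    obtain ⟨l, hl⟩ := (exists_smul_rep_mk_mem_iff K hw0').1 hmem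
    refine hfK _ hl ?_
    have : f (w : CV n) = 0 := hw
    simp [this]
  · rintro L ⟨W, hW, rfl⟩
    set X : Set (CP n) := {z : CP n | ∃ l : ℂ, l • z.rep ∈ K} ∩ {z | z.rep ∈ W}
    have main : X.Nonempty → ContractibleSpace X := by
      rintro ⟨z₀, ⟨l₀, hl₀⟩, hz₀⟩
      let M : Set (CV n) := {w | ∃ l : ℂ, l • w ∈ K}
      obtain ⟨g, hg⟩ := exists_continuous_forall_mem_convex_of_local_const
        (X := M) (t := fun w => {l : ℂ | l • (w : CV n) ∈ K})
        (fun w => hK.linear_preimage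
          ((LinearMap.toSpanSingleton ℂ (CV n) (w : CV n)).restrictScalars ℝ))
        (fun w => by
          obtain ⟨l, hl⟩ := w.2
          have hc : Continuous fun y : M => l • (y : CV n) := by fun_prop
          exact ⟨l, hc.continuousAt.eventually (hKo.mem_nhds hl)⟩)
      have hfX : ∀ x ∈ X, f x.rep ≠ 0 := by
        rintro x ⟨⟨l, hl⟩, -⟩ h
        exact hfK _ hl (by simp [h])
      have hNM : ∀ x : X, (f x.1.rep)⁻¹ • x.1.rep ∈ M := by
        rintro ⟨x, hx⟩
        obtain ⟨l, hl⟩ := hx.1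
        refine ⟨l * f x.rep, ?_⟩
        rwa [smul_smul, mul_assoc, mul_inv_cancel₀ (hfX x hx), mul_one]
      let N : C(X, M) := ⟨fun x => ⟨(f x.1.rep)⁻¹ • x.1.rep, hNM x⟩,
        Continuous.subtype_mk (continuous_iff_continuousAt.2 fun x =>
          (continuousAt_inv_smul_rep f (hfX x.1 x.2)).comp continuous_subtype_val.continuousAt) hNM⟩
      let Y : Set (CV n) := K ∩ W
      have hYne : ∀ y ∈ Y, y ≠ 0 := fun y hy h => h0 (h ▸ hy.1)
      have : ContractibleSpace Y :=
        (hK.inter (W.restrictScalars ℝ).convex).contractibleSpace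
          ⟨l₀ • z₀.rep, hl₀, W.smul_mem _ hz₀⟩
      let s : C(X, Y) := ⟨fun x => ⟨g (N x) • (N x : CV n), hg (N x),
          W.smul_mem _ (W.smul_mem _ x.2.2)⟩,
        Continuous.subtype_mk (by fun_prop) _⟩
      let p : C(Y, X) := ⟨fun y => ⟨Projectivization.mk ℂ y.1 (hYne y.1 y.2),
          (exists_smul_rep_mk_mem_iff K _).2 ⟨1, by simpa using y.2.1⟩,
          (rep_mk_mem_iff W _).2 y.2.2⟩,
        Continuous.subtype_mk (Projectivization.isOpenQuotientMap_mk'.continuous.comp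
          (Continuous.subtype_mk continuous_subtype_val fun y => hYne y.1 y.2)) _⟩
      have hps : p.comp ((ContinuousMap.id Y).comp s) = ContinuousMap.id X := by
        ext1 x
        apply Subtype.ext
        conv_rhs => rw [ContinuousMap.id_apply, ← x.1.mk_rep]
        refine (Projectivization.mk_eq_mk_iff' ℂ _ _ _ _).2 ⟨g (N x) * (f x.1.rep)⁻¹, ?_⟩
        exact mul_smul _ _ _
      rw [contractible_iff_id_nullhomotopic, ← hps]
      exact ((id_nullhomotopic Y).comp_left s).comp_right p
    refine ⟨?_, fun hne => ?_⟩
    · rcases X.eq_empty_or_nonempty with h | h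
      · rw [h]; exact isPreconnected_empty
      · have := main h
        exact isPreconnected_iff_preconnectedSpace.2 inferInstance
    · have := main hne
      infer_instance

theorem isOpen_quadrantTube {n : ℕ} {C : Set (RV n)} (hC : IsOpen C) :
    IsOpen (quadrantTube C) :=
  (hC.preimage (f := fun w : CV n => fun i => (w i).re) (by fun_prop)).inter
    (hC.preimage (f := fun w : CV n => fun i => (w i).im) (by fun_prop))

theorem convex_quadrantTube {n : ℕ} {C : Set (RV n)}
    (hC : Convex ℝ C) : Convex ℝ (quadrantTube C) := by
  intro w hw w' hw' a b ha hb hab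
  constructor
  · convert hC hw.1 hw'.1 ha hb hab using 1
    ext i
    simp
  · convert hC hw.2 hw'.2 ha hb hab using 1
    ext i
    simp

/-- If `D ⊆ ℝℙⁿ` is an open properly convex set, then its elliptic tube
`D^e ⊆ ℂℙⁿ` is ℂ-convex. -/
theorem eTube_cConvex_of_open_properlyConvex
    (n : ℕ) (D : Set (RP n)) (hDo : IsOpen D) (hpc : properlyConvexR D) :
    cConvex (eTube D) := by
  have hne : D.Nonempty := by
    rw [Set.nonempty_iff_ne_empty]
    rintro rfl
    refine hpc.2.1 _ ⟨LinearMap.proj 0, fun h => ?_, rfl⟩ (Set.empty_subset _)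
    simpa using LinearMap.congr_fun h 1
  obtain ⟨C, hCo, hC, hCj, hCD⟩ := exists_cone_of_open_convexR hDo hpc.1 hne
  rw [eTube_eq hC hCj hCD]
  refine cConvex_of_convex (isOpen_quadrantTube hCo) (convex_quadrantTube ?_) fun h => ?_
  · intro u hu v hv a b ha hb hab
    exact hC u hu v hv a b ha hb (by linarith)
  · exact ((hCD _).2 (Or.inl h.1)).1 (by ext i; simp)
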